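/- arXiv:1703.10489 — 8 statements merged into one kernel-verified Lean document; each statement's English description precedes it below -/
import Mathlib

section
/- Let n ≥ 1 and let r_1, …, r_n be positive real numbers. Define h(s) := (n+4)·s − Σ_{j=1}^n √(s² + 16·r_j) for s > 0. Then h has exactly one root in (0, ∞). -/
/-!
The equation `h(s) = 0` says that `s` is a fixed point of `s ↦ (n + 4)⁻¹ ∑ⱼ √(s² + 16 rⱼ)`. Each
summand is a Euclidean norm `‖(s, 4√rⱼ)‖`, hence 1-Lipschitz in `s`, so this map contracts all of
`ℝ` with constant `n / (n + 4) < 1` and has exactly one fixed point by Banach's theorem. The map is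
positive, hence so is its fixed point.
-/

open scoped NNReal

theorem lipschitzWith_finsetSum {ι α E : Type*} [PseudoEMetricSpace α] [SeminormedAddCommGroup E]
    {s : Finset ι} {f : ι → α → E} {K : ι → ℝ≥0} (hf : ∀ i ∈ s, LipschitzWith (K i) (f i)) :
    LipschitzWith (∑ i ∈ s, K i) (fun x ↦ ∑ i ∈ s, f i x) := by
  induction s using Finset.cons_induction with
  | empty => simpa only [Finset.sum_empty] using LipschitzWith.const (0 : E)
  | cons i s hi ih =>
    rw [Finset.forall_mem_cons] at hf
    simpa only [Finset.sum_cons] using hf.1.add (ih hf.2)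

theorem contractingWith_inv_smul {𝕜 E : Type*} [NormedField 𝕜] [NormedAddCommGroup E]
    [NormedSpace 𝕜 E] {g : E → E} {K : ℝ≥0} {a : 𝕜} (hg : LipschitzWith K g) (hKa : K < ‖a‖₊) :
    ContractingWith (‖a⁻¹‖₊ * K) (fun x ↦ a⁻¹ • g x) := by
  refine ⟨?_, (lipschitzWith_smul a⁻¹).comp hg⟩
  rwa [nnnorm_inv, inv_mul_lt_one₀ (pos_of_gt hKa)]

theorem existsUnique_smul_eq_of_lipschitzWith {𝕜 E : Type*} [NormedField 𝕜] [NormedAddCommGroup E]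
    [NormedSpace 𝕜 E] [CompleteSpace E] {g : E → E} {K : ℝ≥0} {a : 𝕜} (hg : LipschitzWith K g)
    (hKa : K < ‖a‖₊) : ∃! x, a • x = g x := by
  have ha : a ≠ 0 := nnnorm_pos.1 (pos_of_gt hKa)
  have hcontr := contractingWith_inv_smul hg hKa
  have isFixedPt_iff (x : E) : Function.IsFixedPt (fun x ↦ a⁻¹ • g x) x ↔ a • x = g x :=
    (inv_smul_eq_iff₀ ha).trans eq_comm
  simp only [← isFixedPt_iff]
  exact ⟨_, hcontr.fixedPoint_isFixedPt, fun _ hx ↦ hcontr.fixedPoint_unique hx⟩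

theorem lipschitzWith_sqrt_sq_add {c : ℝ} (hc : 0 ≤ c) :
    LipschitzWith 1 (fun s : ℝ ↦ √(s ^ 2 + c)) := by
  have sqrt_eq_norm (s : ℝ) : √(s ^ 2 + c) = ‖(s + √c * Complex.I : ℂ)‖ := by
    rw [Complex.norm_add_mul_I, Real.sq_sqrt hc]
  refine LipschitzWith.mk_one fun s t ↦ ?_
  simp only [sqrt_eq_norm, Real.dist_eq]
  calc |‖(s + √c * Complex.I : ℂ)‖ - ‖(t + √c * Complex.I : ℂ)‖|
      ≤ ‖(s + √c * Complex.I : ℂ) - (t + √c * Complex.I)‖ := abs_norm_sub_norm_le _ _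
    _ = |s - t| := by
      rw [add_sub_add_right_eq_sub, ← Complex.ofReal_sub, Complex.norm_real, Real.norm_eq_abs]

section SumSqrt

variable {ι : Type*} [Fintype ι] {c : ι → ℝ}

theorem existsUnique_mul_eq_sum_sqrt_sq_add {a : ℝ} (ha : Fintype.card ι < |a|)
    (hc : ∀ j, 0 ≤ c j) : ∃! s : ℝ, a * s = ∑ j, √(s ^ 2 + c j) := by
  have hlip : LipschitzWith (Fintype.card ι) (fun s : ℝ ↦ ∑ j, √(s ^ 2 + c j)) := by
    simpa using lipschitzWith_finsetSum (s := Finset.univ) fun j _ ↦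
      lipschitzWith_sqrt_sq_add (hc j)
  have hKa : (Fintype.card ι : ℝ≥0) < ‖a‖₊ := by
    rwa [← NNReal.coe_lt_coe, coe_nnnorm, Real.norm_eq_abs, NNReal.coe_natCast]
  exact existsUnique_smul_eq_of_lipschitzWith hlip hKa

theorem sum_sqrt_sq_add_pos (hc : ∃ j, 0 < c j) (s : ℝ) : 0 < ∑ j, √(s ^ 2 + c j) := by
  obtain ⟨j, hj⟩ := hc
  exact Finset.sum_pos' (fun _ _ ↦ Real.sqrt_nonneg _)
    ⟨j, Finset.mem_univ j, Real.sqrt_pos.2 (by positivity)⟩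

theorem stmt_0_general {a : ℝ} (ha : Fintype.card ι < a) (hc : ∀ j, 0 ≤ c j)
    (hpos : ∃ j, 0 < c j) : ∃! s : ℝ, 0 < s ∧ a * s - ∑ j, √(s ^ 2 + c j) = 0 := by
  have ha_pos : 0 < a := (Nat.cast_nonneg _).trans_lt ha
  have root_pos {s : ℝ} (hs : a * s = ∑ j, √(s ^ 2 + c j)) : 0 < s :=
    pos_of_mul_pos_right (hs ▸ sum_sqrt_sq_add_pos hpos s) ha_pos.le
  simp only [sub_eq_zero, and_iff_right_of_imp root_pos]
  exact existsUnique_mul_eq_sum_sqrt_sq_add (ha.trans_le (le_abs_self a)) hc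

end SumSqrt

/-- Let `n ≥ 1` and `r_1, …, r_n` be positive reals. Define
`h(s) := (n+4)·s − Σ_j √(s² + 16·r_j)` for `s > 0`. Then `h` has exactly one
root in `(0, ∞)`. -/
theorem stmt_0 (n : ℕ) (hn : 1 ≤ n) (r : Fin n → ℝ) (hr : ∀ j, 0 < r j) :
    ∃! s : ℝ, 0 < s ∧
      ((n : ℝ) + 4) * s - ∑ j, Real.sqrt (s ^ 2 + 16 * r j) = 0 := by
  have hc (j : Fin n) : 0 < 16 * r j := mul_pos (by norm_num) (hr j)
  exact stmt_0_general (by simp) (fun j ↦ (hc j).le) ⟨⟨0, hn⟩, hc _⟩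
end

section
/- Let n ≥ 1, let r_1, …, r_n be positive real numbers, and let s > 0 satisfy (n+4)·s = Σ_{j=1}^n √(s² + 16·r_j). Define p_i := −s/(4·r_i) + √(s²/(16·r_i²) + 1/r_i) for i = 1, …, n. Then p_i > 0 for every i, Σ_{j=1}^n p_j·r_j = s, and for every i it holds that p_i²·r_i + (1/2)·(Σ_{j=1}^n p_j·r_j)·p_i = 1. -/
/-!
For a fixed value `s` of the coupling term `∑ j, p j * r j`, each equation of the system is a
quadratic in `p i` alone, and `p i` is its larger root. Multiplying that root by `m * r i` turns it
into `-s + √(s ^ 2 + m ^ 2 * (r i * d i))`, so the scalar equation for `s` is precisely the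
requirement that these roots reproduce the coupling term they were computed from. The paper's
system is the case `m = 4`, `d = 1`.
-/

/-- The larger root of the monic quadratic `x ^ 2 + 2 * b * x = c`, real when `0 ≤ b ^ 2 + c`.
Halving the linear coefficient keeps the formula free of numerical factors. -/
noncomputable def largerQuadraticRoot (b c : ℝ) : ℝ :=
  -b + √(b ^ 2 + c)

namespace largerQuadraticRoot

variable {a b c : ℝ}

theorem pos (hc : 0 < c) : 0 < largerQuadraticRoot b c :=
  lt_neg_add_iff_lt.mpr <| Real.lt_sqrt_of_sq_lt <| lt_add_of_pos_right _ hc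

theorem sq_add_two_mul (h : 0 ≤ b ^ 2 + c) :
    largerQuadraticRoot b c ^ 2 + 2 * b * largerQuadraticRoot b c = c := by
  rw [largerQuadraticRoot]
  linear_combination Real.sq_sqrt h

theorem mul_of_nonneg (ha : 0 ≤ a) :
    largerQuadraticRoot b c * a = largerQuadraticRoot (b * a) (c * a ^ 2) := by
  rw [largerQuadraticRoot, largerQuadraticRoot, mul_pow, ← add_mul,
    Real.sqrt_mul' _ (sq_nonneg a), Real.sqrt_sq ha]
  ring

theorem mul_sq_add_linear {m r d s : ℝ} (hm : m ≠ 0) (hr : 0 < r) (hd : 0 ≤ d) :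
    largerQuadraticRoot (s / (m * r)) (d / r) ^ 2 * r +
      2 / m * s * largerQuadraticRoot (s / (m * r)) (d / r) = d := by
  set x := largerQuadraticRoot (s / (m * r)) (d / r)
  have hx : x ^ 2 + 2 * (s / (m * r)) * x = d / r := sq_add_two_mul (by positivity)
  calc x ^ 2 * r + 2 / m * s * x = (x ^ 2 + 2 * (s / (m * r)) * x) * r := by field_simp
    _ = d := by rw [hx, div_mul_cancel₀ d hr.ne']

theorem mul_eq_neg_add_sqrt_div {m r d s : ℝ} (hm : 0 < m) (hr : 0 < r) :
    largerQuadraticRoot (s / (m * r)) (d / r) * r = (-s + √(s ^ 2 + m ^ 2 * (r * d))) / m := by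
  have hmr : 0 < m * r := mul_pos hm hr
  have hc : d / r * (m * r) ^ 2 = m ^ 2 * (r * d) := by field_simp
  rw [eq_div_iff hm.ne', mul_assoc, mul_comm r m, mul_of_nonneg hmr.le,
    div_mul_cancel₀ s hmr.ne', hc, largerQuadraticRoot]

theorem sum_mul_eq {ι : Type*} [Fintype ι] {m s : ℝ} {r d : ι → ℝ} (hm : 0 < m)
    (hr : ∀ j, 0 < r j)
    (hroot : ((Fintype.card ι : ℝ) + m) * s = ∑ j, √(s ^ 2 + m ^ 2 * (r j * d j))) :
    ∑ j, largerQuadraticRoot (s / (m * r j)) (d j / r j) * r j = s := by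
  calc ∑ j, largerQuadraticRoot (s / (m * r j)) (d j / r j) * r j
      = ∑ j, (-s + √(s ^ 2 + m ^ 2 * (r j * d j))) / m :=
        Finset.sum_congr rfl fun j _ => mul_eq_neg_add_sqrt_div hm (hr j)
    _ = (Fintype.card ι * -s + (Fintype.card ι + m) * s) / m := by
        rw [← Finset.sum_div, Finset.sum_add_distrib, ← hroot, Finset.sum_const,
          Finset.card_univ, nsmul_eq_mul]
    _ = s := by field_simp; ring

end largerQuadraticRoot

theorem stmt_3_general {ι : Type*} [Fintype ι] {m s : ℝ} {r d p : ι → ℝ} (hm : 0 < m)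
    (hr : ∀ j, 0 < r j) (hd : ∀ j, 0 < d j)
    (hroot : ((Fintype.card ι : ℝ) + m) * s = ∑ j, √(s ^ 2 + m ^ 2 * (r j * d j)))
    (hp : ∀ i, p i = largerQuadraticRoot (s / (m * r i)) (d i / r i)) :
    (∀ i, 0 < p i) ∧
    (∑ j, p j * r j = s) ∧
    (∀ i, p i ^ 2 * r i + 2 / m * (∑ j, p j * r j) * p i = d i) := by
  have hsum : ∑ j, p j * r j = s := by
    simpa only [hp] using largerQuadraticRoot.sum_mul_eq hm hr hroot
  refine ⟨fun i => ?_, hsum, fun i => ?_⟩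
  · rw [hp]
    exact largerQuadraticRoot.pos (div_pos (hd i) (hr i))
  · rw [hsum, hp]
    exact largerQuadraticRoot.mul_sq_add_linear hm.ne' (hr i) (hd i).le

/-- Let `n ≥ 1`, let `r_1, …, r_n` be positive reals, and let
`s > 0` satisfy `(n+4)·s = Σ_j √(s² + 16·r_j)`. Define
`p_i := −s/(4·r_i) + √(s²/(16·r_i²) + 1/r_i)`. Then `p_i > 0` for every `i`,
`Σ_j p_j·r_j = s`, and for every `i`,
`p_i²·r_i + (1/2)·(Σ_j p_j·r_j)·p_i = 1`. -/
theorem stmt_3 (n : ℕ) (hn : 1 ≤ n) (r : Fin n → ℝ) (hr : ∀ j, 0 < r j)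
    (s : ℝ) (hs : 0 < s)
    (hroot : ((n : ℝ) + 4) * s = ∑ j, Real.sqrt (s ^ 2 + 16 * r j))
    (p : Fin n → ℝ)
    (hp : ∀ i, p i = -(s / (4 * r i)) +
      Real.sqrt (s ^ 2 / (16 * (r i) ^ 2) + 1 / r i)) :
    (∀ i, 0 < p i) ∧
    (∑ j, p j * r j = s) ∧
    (∀ i, (p i) ^ 2 * r i + (1 / 2) * (∑ j, p j * r j) * p i = 1) := by
  have hroot' : ((Fintype.card (Fin n) : ℝ) + 4) * s = ∑ j, √(s ^ 2 + 4 ^ 2 * (r j * 1)) := by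
    norm_num [hroot]
  have hp' (i : Fin n) : p i = largerQuadraticRoot (s / (4 * r i)) (1 / r i) := by
    norm_num [hp, largerQuadraticRoot, div_pow, mul_pow]
  simpa only [show (2 : ℝ) / 4 = 1 / 2 by norm_num] using
    stmt_3_general four_pos hr (fun _ => one_pos) hroot' hp'
end

section
/- Let n ≥ 1 and let r_1, …, r_n be positive real numbers. Then there exists exactly one vector p ∈ ℝⁿ with p_i > 0 for all i such that p_i²·r_i + (1/2)·(Σ_{j=1}^n p_j·r_j)·p_i = 1 holds for every i ∈ {1, …, n}. -/
/-!
Once the coupling term `s = (1 / 2) * ∑ j, p j * r j` is known, the equations decouple, and each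
`p i` is the unique positive root of `x ^ 2 * r i + s * x = 1`. This root is continuous and antitone
in `s`, so consistency of `s` is a fixed-point equation for a continuous antitone function on `ℝ`,
which has exactly one solution.
-/

open Function

theorem existsUnique_isFixedPt_of_antitone {α : Type*} [ConditionallyCompleteLinearOrder α]
    [TopologicalSpace α] [OrderTopology α] [DenselyOrdered α] [Nonempty α] {f : α → α}
    (hf : Antitone f) (hc : Continuous f) : ∃! x, IsFixedPt f x := by
  apply existsUnique_of_exists_of_unique
  · obtain ⟨x⟩ := ‹Nonempty α›
    rcases le_total x (f x) with h | h
    · obtain ⟨c, -, hfix⟩ := exists_mem_uIcc_isFixedPt hc.continuousOn h (hf h)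
      exact ⟨c, hfix⟩
    · obtain ⟨c, -, hfix⟩ := exists_mem_uIcc_isFixedPt hc.continuousOn (hf h) h
      exact ⟨c, hfix⟩
  · have le_of_isFixedPt {x y : α} (hx : IsFixedPt f x) (hy : IsFixedPt f y) : x ≤ y := by
      by_contra! h
      exact h.not_ge (by simpa only [hx.eq, hy.eq] using hf h.le)
    exact fun x y hx hy => (le_of_isFixedPt hx hy).antisymm (le_of_isFixedPt hy hx)

theorem le_of_quadratic_eq_one {R : Type*} [CommRing R] [LinearOrder R] [IsStrictOrderedRing R]
    {a s t x y : R} (ha : 0 ≤ a) (hx : 0 < x) (hy : 0 < y) (hxs : x ^ 2 * a + s * x = 1)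
    (hyt : y ^ 2 * a + t * y = 1) (hst : s ≤ t) : y ≤ x := by
  by_contra! hxy
  have hcross : x * y * (a * (y - x) + (t - s)) = x - y := by
    linear_combination x * hyt - y * hxs
  have hnonneg : 0 ≤ x * y * (a * (y - x) + (t - s)) :=
    mul_nonneg (mul_pos hx hy).le
      (add_nonneg (mul_nonneg ha (sub_nonneg.2 hxy.le)) (sub_nonneg.2 hst))
  linarith

/-- The positive root `x` of `x ^ 2 * a + s * x = 1`, for `0 < a` and arbitrary real `s`, given by
the quadratic formula. -/
noncomputable def posRoot (a s : ℝ) : ℝ :=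
  (-s + √(s ^ 2 + 4 * a)) / (2 * a)

section posRoot

variable {a : ℝ}

theorem continuous_posRoot (a : ℝ) : Continuous (posRoot a) := by
  unfold posRoot
  fun_prop

theorem posRoot_pos (ha : 0 < a) (s : ℝ) : 0 < posRoot a s := by
  have hlt : s < √(s ^ 2 + 4 * a) := Real.lt_sqrt_of_sq_lt (by linarith)
  exact div_pos (by linarith) (by positivity)

theorem posRoot_quadratic (ha : 0 < a) (s : ℝ) :
    posRoot a s ^ 2 * a + s * posRoot a s = 1 := by
  have hdiscrim : discrim a s (-1) = √(s ^ 2 + 4 * a) * √(s ^ 2 + 4 * a) := by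
    rw [Real.mul_self_sqrt (by positivity), discrim]
    ring
  have hroot := (quadratic_eq_zero_iff ha.ne' hdiscrim (posRoot a s)).2 (Or.inl rfl)
  linarith

theorem eq_posRoot_iff (ha : 0 < a) {s x : ℝ} :
    x = posRoot a s ↔ 0 < x ∧ x ^ 2 * a + s * x = 1 := by
  constructor
  · rintro rfl
    exact ⟨posRoot_pos ha s, posRoot_quadratic ha s⟩
  · rintro ⟨hx, hquad⟩
    exact le_antisymm
      (le_of_quadratic_eq_one ha.le (posRoot_pos ha s) hx (posRoot_quadratic ha s) hquad le_rfl)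
      (le_of_quadratic_eq_one ha.le hx (posRoot_pos ha s) hquad (posRoot_quadratic ha s) le_rfl)

theorem antitone_posRoot (ha : 0 < a) : Antitone (posRoot a) := fun s t hst =>
  le_of_quadratic_eq_one ha.le (posRoot_pos ha s) (posRoot_pos ha t) (posRoot_quadratic ha s)
    (posRoot_quadratic ha t) hst

end posRoot

theorem existsUnique_isFixedPt_sum_posRoot {ι : Type*} [Fintype ι] {a w : ι → ℝ}
    (ha : ∀ i, 0 < a i) (hw : ∀ i, 0 ≤ w i) :
    ∃! s, IsFixedPt (fun s => ∑ i, posRoot (a i) s * w i) s :=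
  existsUnique_isFixedPt_of_antitone
    (fun _ _ hst => Finset.sum_le_sum fun i _ =>
      mul_le_mul_of_nonneg_right (antitone_posRoot (ha i) hst) (hw i))
    (continuous_finsetSum _ fun i _ => (continuous_posRoot (a i)).mul_const (w i))

theorem stmt_4_general {ι : Type*} [Fintype ι] {a w : ι → ℝ}
    (ha : ∀ i, 0 < a i) (hw : ∀ i, 0 ≤ w i) :
    ∃! p : ι → ℝ, (∀ i, 0 < p i) ∧ ∀ i, p i ^ 2 * a i + (∑ j, p j * w j) * p i = 1 := by
  have solution_iff (p : ι → ℝ) :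
      ((∀ i, 0 < p i) ∧ ∀ i, p i ^ 2 * a i + (∑ j, p j * w j) * p i = 1) ↔
        p = fun i => posRoot (a i) (∑ j, p j * w j) := by
    simp only [funext_iff, eq_posRoot_iff (ha _), forall_and]
  simp only [solution_iff]
  obtain ⟨s, hs, hs_unique⟩ := existsUnique_isFixedPt_sum_posRoot ha hw
  refine ⟨fun i => posRoot (a i) s, funext fun i => congrArg (posRoot (a i)) hs.symm,
    fun p hp => ?_⟩
  have hsum : ∑ j, p j * w j = s :=
    hs_unique _ (Finset.sum_congr rfl fun j _ => congrArg (· * w j) (congrFun hp j).symm)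
  exact hp.trans (by rw [hsum])

/-- Let `n ≥ 1` and let `r_1, …, r_n` be positive reals. Then
there exists exactly one vector `p ∈ ℝⁿ` with all entries positive such that
`p_i²·r_i + (1/2)·(Σ_j p_j·r_j)·p_i = 1` for every `i`. -/
theorem stmt_4 (n : ℕ) (hn : 1 ≤ n) (r : Fin n → ℝ) (hr : ∀ j, 0 < r j) :
    ∃! p : Fin n → ℝ, (∀ i, 0 < p i) ∧
      ∀ i, (p i) ^ 2 * r i + (1 / 2) * (∑ j, p j * r j) * p i = 1 := by
  simpa only [Finset.mul_sum, mul_left_comm] using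
    stmt_4_general hr fun i => mul_nonneg one_half_pos.le (hr i).le
end

section
/- Let Q and R be n×n real symmetric positive definite matrices, let Q^{1/2} denote the symmetric positive definite square root of Q, and let R̃ := Q^{1/2}·R·Q^{1/2} = U·diag(r_1, …, r_n)·Uᵀ be a spectral decomposition with U orthogonal and r_i > 0. Let s > 0 be a root of h(s) := (n+4)·s − Σ_{j=1}^n √(s² + 16·r_j), and set p_i := −s/(4·r_i) + √(s²/(16·r_i²) + 1/r_i). Then the matrix P := Q^{1/2}·U·diag(p_1, …, p_n)·Uᵀ·Q^{1/2} is symmetric positive definite and satisfies the Riccati-like equation P·R·P + (1/2)·Tr(R·P)·P = Q. -/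
open Matrix

/-!
Put `V = sqrtQ * U`. Then `V * Vᵀ = Q` and `Vᵀ * R * V = diagonal r`, so for
`P = V * diagonal p * Vᵀ` the left-hand side of the equation is `V * diagonal q * Vᵀ` with
`q i = r i * p i ^ 2 + t / 2 * p i` and `t = Tr (R * P) = ∑ i, r i * p i`. It remains to find
positive `p` with `q = 1`. If the trace is prescribed to be `s`, each `p i` must be the positive
root of `r i * x ^ 2 + s / 2 * x = 1`, and the trace of the resulting `P` is `s` exactly when
`h s = 0`.
-/

section PositiveRoot

/-- The positive root of the quadratic equation `r * x ^ 2 + b / 2 * x = 1`, for `0 < r`. The linear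
coefficient is halved so that the eigenvalue `p_i` is `positiveRoot s (r i)`. -/
noncomputable def positiveRoot (b r : ℝ) : ℝ :=
  -(b / (4 * r)) + √(b ^ 2 / (16 * r ^ 2) + 1 / r)

variable (b : ℝ) {r : ℝ}

lemma mul_positiveRoot (hr : 0 < r) :
    r * positiveRoot b r = (√(b ^ 2 + 16 * r) - b) / 4 := by
  have hsqrt : √(b ^ 2 / (16 * r ^ 2) + 1 / r) = √(b ^ 2 + 16 * r) / (4 * r) := by
    have hdiv : b ^ 2 / (16 * r ^ 2) + 1 / r = (b ^ 2 + 16 * r) / (4 * r) ^ 2 := by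
      field_simp
      ring
    rw [hdiv, Real.sqrt_div (by positivity), Real.sqrt_sq (by positivity)]
  rw [positiveRoot, hsqrt]
  field_simp
  ring

lemma positiveRoot_pos (hr : 0 < r) : 0 < positiveRoot b r := by
  have hlt : b < √(b ^ 2 + 16 * r) := Real.lt_sqrt_of_sq_lt (by linarith)
  refine pos_of_mul_pos_right ?_ hr.le
  rw [mul_positiveRoot b hr]
  linarith

lemma mul_positiveRoot_sq_add (hr : 0 < r) :
    r * positiveRoot b r ^ 2 + b / 2 * positiveRoot b r = 1 := by
  have hsq : √(b ^ 2 + 16 * r) ^ 2 = b ^ 2 + 16 * r := Real.sq_sqrt (by positivity)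
  have hsqrt : √(b ^ 2 + 16 * r) = 4 * (r * positiveRoot b r) + b := by
    rw [mul_positiveRoot b hr]
    ring
  rw [hsqrt] at hsq
  apply mul_left_cancel₀ hr.ne'
  linarith

lemma sum_mul_positiveRoot {ι : Type*} [Fintype ι] {r : ι → ℝ} (hr : ∀ i, 0 < r i) :
    ∑ i, r i * positiveRoot b (r i) =
      (∑ i, √(b ^ 2 + 16 * r i) - Fintype.card ι * b) / 4 := by
  simp_rw [fun i => mul_positiveRoot b (hr i)]
  rw [← Finset.sum_div, Finset.sum_sub_distrib, Finset.sum_const, Finset.card_univ, nsmul_eq_mul]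

lemma sum_mul_positiveRoot_eq {ι : Type*} [Fintype ι] {c s : ℝ} {r : ι → ℝ} (hr : ∀ i, 0 < r i)
    (hroot : (Fintype.card ι * c + 4) * s - ∑ j, √((c * s) ^ 2 + 16 * r j) = 0) :
    ∑ i, r i * positiveRoot (c * s) (r i) = s := by
  rw [sum_mul_positiveRoot _ hr]
  linarith

lemma mul_positiveRoot_sq_add_sum_mul {ι : Type*} [Fintype ι] {c s : ℝ} {r : ι → ℝ}
    (hr : ∀ i, 0 < r i)
    (hroot : (Fintype.card ι * c + 4) * s - ∑ j, √((c * s) ^ 2 + 16 * r j) = 0) (i : ι) :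
    r i * positiveRoot (c * s) (r i) ^ 2 +
      c / 2 * (∑ j, r j * positiveRoot (c * s) (r j)) * positiveRoot (c * s) (r i) = 1 := by
  rw [sum_mul_positiveRoot_eq hr hroot, div_mul_eq_mul_div]
  exact mul_positiveRoot_sq_add (c * s) (hr i)

end PositiveRoot

section Congruence

variable {m ι α : Type*} [Fintype m] [Fintype ι] [DecidableEq ι] [CommSemiring α]
  {R : Matrix m m α} {V : Matrix m ι α} {W : Matrix ι m α} {d : ι → α}

lemma trace_mul_mul_diagonal_mul (h : W * R * V = diagonal d) (p : ι → α) :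
    trace (R * (V * diagonal p * W)) = ∑ i, d i * p i := by
  calc trace (R * (V * diagonal p * W)) = trace (R * V * diagonal p * W) := by
        simp only [Matrix.mul_assoc]
    _ = trace (W * R * V * diagonal p) := by
        rw [trace_mul_comm]
        simp only [Matrix.mul_assoc]
    _ = ∑ i, d i * p i := by
        rw [h, diagonal_mul_diagonal, trace_diagonal]

lemma mul_diagonal_mul_mul_self (h : W * R * V = diagonal d) (p : ι → α) :
    V * diagonal p * W * R * (V * diagonal p * W) =
      V * diagonal (fun i => d i * p i ^ 2) * W := by
  calc V * diagonal p * W * R * (V * diagonal p * W)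
      = V * (diagonal p * (W * R * V) * diagonal p) * W := by
        simp only [Matrix.mul_assoc]
    _ = V * diagonal (fun i => d i * p i ^ 2) * W := by
        rw [h, diagonal_mul_diagonal, diagonal_mul_diagonal]
        congr! 4 with i
        ring

lemma riccati_mul_diagonal_mul (h : W * R * V = diagonal d) (p : ι → α) (k : α) :
    V * diagonal p * W * R * (V * diagonal p * W) +
        (k * trace (R * (V * diagonal p * W))) • (V * diagonal p * W) =
      V * diagonal (fun i => d i * p i ^ 2 + k * (∑ j, d j * p j) * p i) * W := by
  rw [mul_diagonal_mul_mul_self h, trace_mul_mul_diagonal_mul h, ← Matrix.smul_mul,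
    ← Matrix.mul_smul, ← Matrix.add_mul, ← Matrix.mul_add, ← diagonal_smul, diagonal_add]
  rfl

end Congruence

lemma isUnit_of_mul_eq_diagonal {ι K : Type*} [Fintype ι] [DecidableEq ι] [Field K]
    {A V : Matrix ι ι K} {d : ι → K} (hd : ∀ i, d i ≠ 0) (h : A * V = diagonal d) : IsUnit V := by
  refine isUnit_of_mul_isUnit_right (x := A) ?_
  rw [h, isUnit_diagonal, Pi.isUnit_iff]
  exact fun i => (hd i).isUnit

section General

open scoped ComplexOrder

variable {𝕜 ι : Type*} [RCLike 𝕜] [Fintype ι] [DecidableEq ι]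

lemma posDef_mul_diagonal_ofReal_mul_conjTranspose {V : Matrix ι ι 𝕜} (hV : IsUnit V) {p : ι → ℝ}
    (hp : ∀ i, 0 < p i) : (V * diagonal (fun i => (p i : 𝕜)) * Vᴴ).PosDef :=
  (PosDef.diagonal fun i => RCLike.ofReal_pos.mpr (hp i)).mul_mul_conjTranspose_same
    (vecMul_injective_of_isUnit hV)

theorem stmt_5_general {Q R L U : Matrix ι ι 𝕜} {r : ι → ℝ} {c s : ℝ}
    (hL : L * Lᴴ = Q) (hU : U * Uᴴ = 1) (hr : ∀ i, 0 < r i)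
    (hspec : Lᴴ * R * L = U * diagonal (fun i => (r i : 𝕜)) * Uᴴ)
    (hroot : (Fintype.card ι * c + 4) * s - ∑ j, √((c * s) ^ 2 + 16 * r j) = 0)
    {P : Matrix ι ι 𝕜}
    (hP : P = L * U * diagonal (fun i => (positiveRoot (c * s) (r i) : 𝕜)) * Uᴴ * Lᴴ) :
    P.PosDef ∧ P * R * P + ((c : 𝕜) / 2 * trace (R * P)) • P = Q := by
  set V := L * U with hV
  have hVV : V * Vᴴ = Q := by
    rw [hV, conjTranspose_mul, Matrix.mul_assoc, ← Matrix.mul_assoc U, hU, Matrix.one_mul, hL]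
  have hVRV : Vᴴ * R * V = diagonal (fun i => (r i : 𝕜)) := by
    calc Vᴴ * R * V = Uᴴ * (Lᴴ * R * L) * U := by
          simp only [hV, conjTranspose_mul, Matrix.mul_assoc]
      _ = Uᴴ * U * diagonal (fun i => (r i : 𝕜)) * (Uᴴ * U) := by
          simp only [hspec, Matrix.mul_assoc]
      _ = diagonal (fun i => (r i : 𝕜)) := by
          rw [mul_eq_one_comm.mp hU, Matrix.one_mul, Matrix.mul_one]
  have hVunit : IsUnit V :=
    isUnit_of_mul_eq_diagonal (fun i => RCLike.ofReal_ne_zero.mpr (hr i).ne') hVRV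
  have hone (i : ι) : (r i : 𝕜) * (positiveRoot (c * s) (r i) : 𝕜) ^ 2 +
      (c : 𝕜) / 2 * (∑ j, (r j : 𝕜) * (positiveRoot (c * s) (r j) : 𝕜)) *
        (positiveRoot (c * s) (r i) : 𝕜) = 1 :=
    mod_cast mul_positiveRoot_sq_add_sum_mul hr hroot i
  obtain rfl : P = V * diagonal (fun i => (positiveRoot (c * s) (r i) : 𝕜)) * Vᴴ := by
    rw [hP, hV, conjTranspose_mul, ← Matrix.mul_assoc]
  refine ⟨posDef_mul_diagonal_ofReal_mul_conjTranspose hVunit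
    fun i => positiveRoot_pos _ (hr i), ?_⟩
  rw [riccati_mul_diagonal_mul hVRV]
  simp only [hone, diagonal_one, Matrix.mul_one, hVV]

end General

/-- Let `Q`, `R` be `n×n` real symmetric positive definite
matrices, `sqrtQ` the symmetric positive definite square root of `Q`, and let
`sqrtQ·R·sqrtQ = U·diag(r)·Uᵀ` be a spectral decomposition with `U` orthogonal
and `r_i > 0`. Let `s > 0` be a root of
`h(s) = (n+4)·s − Σ_j √(s² + 16·r_j)` and set
`p_i := −s/(4·r_i) + √(s²/(16·r_i²) + 1/r_i)`. Then
`P := sqrtQ·U·diag(p)·Uᵀ·sqrtQ` is symmetric positive definite and satisfies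
`P·R·P + (1/2)·Tr(R·P)·P = Q`. -/
theorem stmt_5 (n : ℕ) (Q R : Matrix (Fin n) (Fin n) ℝ)
    (hQsym : Qᵀ = Q) (hRsym : Rᵀ = R) (hQ : Q.PosDef) (hR : R.PosDef)
    (sqrtQ : Matrix (Fin n) (Fin n) ℝ) (hsqrtQsym : sqrtQᵀ = sqrtQ)
    (hsqrtQ : sqrtQ.PosDef) (hsqrtQsq : sqrtQ * sqrtQ = Q)
    (U : Matrix (Fin n) (Fin n) ℝ) (hU : U * Uᵀ = 1)
    (r : Fin n → ℝ) (hr : ∀ i, 0 < r i)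
    (hspec : sqrtQ * R * sqrtQ = U * Matrix.diagonal r * Uᵀ)
    (s : ℝ) (hs : 0 < s)
    (hroot : ((n : ℝ) + 4) * s - ∑ j, Real.sqrt (s ^ 2 + 16 * r j) = 0)
    (p : Fin n → ℝ)
    (hp : ∀ i, p i = -(s / (4 * r i)) +
      Real.sqrt (s ^ 2 / (16 * (r i) ^ 2) + 1 / r i))
    (P : Matrix (Fin n) (Fin n) ℝ)
    (hP : P = sqrtQ * U * Matrix.diagonal p * Uᵀ * sqrtQ) :
    Pᵀ = P ∧ P.PosDef ∧
      P * R * P + ((1 : ℝ) / 2 * Matrix.trace (R * P)) • P = Q := by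
  obtain rfl : p = fun i => positiveRoot (1 * s) (r i) :=
    funext fun i => by rw [hp, one_mul, positiveRoot]
  have hadj : sqrtQᴴ = sqrtQ := hsqrtQsym
  obtain ⟨hpos, hriccati⟩ := stmt_5_general (Q := Q) (L := sqrtQ) (c := 1) (P := P)
    (by rwa [hadj]) hU hr (by rwa [hadj])
    (by simpa only [Fintype.card_fin, mul_one, one_mul] using hroot) (by rwa [hadj])
  exact ⟨hpos.isHermitian, hpos, hriccati⟩
end

section
/- Let Q and R be n×n real symmetric positive definite matrices. Then there is at most one n×n real symmetric positive definite matrix P satisfying the Riccati-like equation P·R·P + (1/2)·Tr(R·P)·P = Q. -/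
open Matrix

/-!
Write `S` for the square root of `R` and `A = S * P * S`. Conjugating the equation by `S` turns it
into `A * A + s • A = S * Q * S`, where `s` is a multiple of `tr (R * P) = tr A`. For a fixed
right-hand side, the positive semidefinite solution `A` of such an equation decreases in the Loewner
order as `s ≥ 0` increases. So if `A` and `B` are two solutions and `A` has the larger trace, then
`A ≤ B`, and comparing traces again gives `A = B`.
-/

section

open scoped ComplexOrder MatrixOrder

variable {𝕜 n : Type*} [RCLike 𝕜] [Fintype n] {A B : Matrix n n 𝕜}

theorem nonneg_of_sub_mulVec_eq_smul (hA : A.PosSemidef) (hB : B.PosSemidef) {s t : ℝ}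
    (ht : 0 ≤ t) (hts : t ≤ s) (h : A * A + s • A = B * B + t • B) {l : ℝ} {u : n → 𝕜}
    (hu : u ≠ 0) (hl : (B - A) *ᵥ u = l • u) : 0 ≤ l := by
  have hpolar : (s - t) • A = (B - A) * A + B * (B - A) + t • (B - A) := by
    rw [sub_smul, eq_sub_of_add_eq' h, smul_sub, sub_mul, mul_sub]
    abel
  have hl_star : star u ᵥ* (B - A) = l • star u := by
    rw [← (hB.isHermitian.sub hA.isHermitian).eq, ← star_mulVec, hl, star_smul, star_trivial]
  set α := RCLike.re (star u ⬝ᵥ A *ᵥ u)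
  set β := RCLike.re (star u ⬝ᵥ B *ᵥ u)
  set ν := RCLike.re (star u ⬝ᵥ u)
  have hα : 0 ≤ α := hA.re_dotProduct_nonneg u
  have hβ : 0 ≤ β := hB.re_dotProduct_nonneg u
  have hν : 0 < ν := (RCLike.pos_iff.mp (dotProduct_star_self_pos_iff.mpr hu)).1
  have hdiff : β - α = l * ν := by
    simpa only [sub_mulVec, dotProduct_sub, map_sub, dotProduct_smul, RCLike.smul_re] using
      congrArg (fun v => RCLike.re (star u ⬝ᵥ v)) hl
  have hform : (s - t) * α = l * α + l * β + t * (l * ν) := by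
    simpa only [add_mulVec, smul_mulVec, ← mulVec_mulVec, hl, mulVec_smul, dotProduct_add,
      dotProduct_mulVec _ (B - A), hl_star, smul_dotProduct, dotProduct_smul, map_add,
      RCLike.smul_re] using congrArg (fun M => RCLike.re (star u ⬝ᵥ M *ᵥ u)) hpolar
  by_contra! hl_neg
  have hlν : l * ν < 0 := mul_neg_of_neg_of_pos hl_neg hν
  have hα_pos : 0 < α := by linarith
  have hleft : 0 ≤ (s - t) * α := mul_nonneg (sub_nonneg.mpr hts) hα
  have hlα : l * α < 0 := mul_neg_of_neg_of_pos hl_neg hα_pos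
  have hlβ : l * β ≤ 0 := mul_nonpos_of_nonpos_of_nonneg hl_neg.le hβ
  have htlν : t * (l * ν) ≤ 0 := mul_nonpos_of_nonneg_of_nonpos ht hlν.le
  linarith

theorem le_of_mul_self_add_smul_eq (hA : A.PosSemidef) (hB : B.PosSemidef) {s t : ℝ}
    (ht : 0 ≤ t) (hts : t ≤ s) (h : A * A + s • A = B * B + t • B) : A ≤ B := by
  classical
  have hH : (B - A).IsHermitian := hB.isHermitian.sub hA.isHermitian
  refine le_iff.mpr (hH.posSemidef_iff_eigenvalues_nonneg.mpr fun i => ?_)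
  exact nonneg_of_sub_mulVec_eq_smul hA hB ht hts h
    ((WithLp.ofLp_eq_zero 2).ne.mpr (hH.eigenvectorBasis.orthonormal.ne_zero i))
    (hH.mulVec_eigenvectorBasis i)

theorem eq_of_le_of_re_trace_le (hAB : A ≤ B)
    (h : RCLike.re B.trace ≤ RCLike.re A.trace) : A = B := by
  have hD : (B - A).PosSemidef := le_iff.mp hAB
  obtain ⟨hre, him⟩ := RCLike.nonneg_iff.mp hD.trace_nonneg
  have htrace : (B - A).trace = 0 := by
    refine RCLike.ext ?_ (by simpa using him)
    rw [trace_sub, map_sub] at hre ⊢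
    rw [map_zero]
    linarith
  exact (sub_eq_zero.mp (hD.trace_eq_zero_iff.mp htrace)).symm

theorem injOn_mul_self_add_re_trace_smul {c : ℝ} (hc : 0 ≤ c) :
    Set.InjOn (fun A : Matrix n n 𝕜 => A * A + (c * RCLike.re A.trace) • A)
      {A | A.PosSemidef} := by
  intro A hA B hB h
  wlog htr : RCLike.re B.trace ≤ RCLike.re A.trace generalizing A B
  · exact (this hB hA h.symm (le_of_not_ge htr)).symm
  have hle : A ≤ B := le_of_mul_self_add_smul_eq hA hB
    (mul_nonneg hc (RCLike.nonneg_iff.mp hB.trace_nonneg).1) (mul_le_mul_of_nonneg_left htr hc) h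
  exact eq_of_le_of_re_trace_le hle htr

theorem exists_isUnit_isHermitian_mul_self_eq_of_posDef [DecidableEq n] (hA : A.PosDef) :
    ∃ S : Matrix n n 𝕜, IsUnit S ∧ S.IsHermitian ∧ S * S = A :=
  ⟨CFC.sqrt A, hA.isStrictlyPositive.isUnit_cfcSqrt, (CFC.sqrt_nonneg A).posSemidef.isHermitian,
    CFC.sqrt_mul_sqrt_self A hA.posSemidef.nonneg⟩

theorem stmt_6_general {R : Matrix n n 𝕜} (hR : R.PosDef) {c : ℝ} (hc : 0 ≤ c) :
    Set.InjOn (fun P : Matrix n n 𝕜 => P * R * P + (c * RCLike.re (R * P).trace) • P)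
      {P | P.PosSemidef} := by
  classical
  obtain ⟨S, hSunit, hS, rfl⟩ := exists_isUnit_isHermitian_mul_self_eq_of_posDef hR
  have hconj {P : Matrix n n 𝕜} (hP : P.PosSemidef) : (S * P * S).PosSemidef := by
    simpa only [hS.eq] using hP.mul_mul_conjTranspose_same S
  have hmap (P : Matrix n n 𝕜) :
      S * (P * (S * S) * P + (c * RCLike.re (S * S * P).trace) • P) * S
        = S * P * S * (S * P * S) + (c * RCLike.re (S * P * S).trace) • (S * P * S) := by
    rw [trace_mul_comm (S * P) S, ← Matrix.mul_assoc S S P]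
    noncomm_ring
  intro P₁ hP₁ P₂ hP₂ h
  have hS₁₂ : S * P₁ * S = S * P₂ * S := by
    refine injOn_mul_self_add_re_trace_smul hc (hconj hP₁) (hconj hP₂) ?_
    simpa only [hmap] using congrArg (fun M => S * M * S) h
  exact hSunit.mul_left_cancel (hSunit.mul_right_cancel hS₁₂)

end

/-- Let `Q` and `R` be `n×n` real symmetric positive definite
matrices. Then there is at most one `n×n` real symmetric positive definite
matrix `P` satisfying `P·R·P + (1/2)·Tr(R·P)·P = Q`. -/
theorem stmt_6 (n : ℕ) (Q R : Matrix (Fin n) (Fin n) ℝ)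
    (hQsym : Qᵀ = Q) (hRsym : Rᵀ = R) (hQ : Q.PosDef) (hR : R.PosDef) :
    ∀ P₁ P₂ : Matrix (Fin n) (Fin n) ℝ,
      P₁ᵀ = P₁ → P₁.PosDef →
      P₂ᵀ = P₂ → P₂.PosDef →
      P₁ * R * P₁ + ((1 : ℝ) / 2 * Matrix.trace (R * P₁)) • P₁ = Q →
      P₂ * R * P₂ + ((1 : ℝ) / 2 * Matrix.trace (R * P₂)) • P₂ = Q →
      P₁ = P₂ := by
  intro P₁ P₂ _ hP₁ _ hP₂ h₁ h₂
  exact stmt_6_general hR one_half_pos.le hP₁.posSemidef hP₂.posSemidef (h₁.trans h₂.symm)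
end

section
/- Let Q and R be n×n real symmetric positive definite matrices, let Q^{1/2} denote the symmetric positive definite square root of Q, and let Q^{1/2}·R·Q^{1/2} = U·R̄·Uᵀ be a spectral decomposition with U orthogonal and R̄ diagonal with positive diagonal entries. Then a symmetric matrix P satisfies P·R·P + (1/2)·Tr(R·P)·P = Q if and only if the matrix P̄ := Uᵀ·Q^{−1/2}·P·Q^{−1/2}·U satisfies P̄·R̄·P̄ + (1/2)·Tr(R̄·P̄)·P̄ = I. -/
open Matrix

/-!
The left-hand side of the equation is covariant under changes of basis: if `R` is replaced by
`B * R * A` and `P` by `A⁻¹ * P * B⁻¹`, the factors meeting inside the products and inside the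
trace cancel, so the value `X` becomes `A⁻¹ * X * B⁻¹`. Now `A = Q^{1/2} U` and `B = Uᵀ Q^{1/2}`
satisfy `A * B = Q` and `B * R * A = R̄`.
-/

section RiccatiMap

variable {m n p q K : Type*} [Fintype m] [Fintype n] [Fintype p] [Fintype q] [CommRing K]

/-- The Riccati-like expression in `P`: the equation of `stmt_7` is `riccatiMap (1 / 2) R P = Q`.
The matrices may be rectangular, so that the bases of rows and columns transform independently. -/
def riccatiMap (c : K) (R : Matrix p m K) (P : Matrix m p K) : Matrix m p K :=
  P * R * P + (c * trace (R * P)) • P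

theorem riccatiMap_mul_mul [DecidableEq m] [DecidableEq p] (c : K)
    (R : Matrix p m K) (P : Matrix m p K)
    {A : Matrix m n K} {A' : Matrix n m K} {B : Matrix q p K} {B' : Matrix p q K}
    (hA : A * A' = 1) (hB : B' * B = 1) :
    riccatiMap c (B * R * A) (A' * P * B') = A' * riccatiMap c R P * B' := by
  have hRP : B * R * A * (A' * P * B') = B * (R * P) * B' := by
    calc B * R * A * (A' * P * B') = B * R * (A * A') * P * B' := by simp only [Matrix.mul_assoc]
      _ = B * (R * P) * B' := by rw [hA, Matrix.mul_one, Matrix.mul_assoc B]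
  have hPRP : A' * P * B' * (B * R * A) * (A' * P * B') = A' * (P * R * P) * B' := by
    calc A' * P * B' * (B * R * A) * (A' * P * B')
        = A' * P * (B' * B) * (R * P) * B' := by
          rw [Matrix.mul_assoc, hRP]; simp only [Matrix.mul_assoc]
      _ = A' * (P * R * P) * B' := by rw [hB, Matrix.mul_one]; simp only [Matrix.mul_assoc]
  have htrace : trace (B * R * A * (A' * P * B')) = trace (R * P) := by
    rw [hRP, trace_mul_cycle, hB, Matrix.one_mul]
  rw [riccatiMap, riccatiMap, htrace, hPRP, Matrix.mul_add, Matrix.add_mul, Matrix.mul_smul,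
    Matrix.smul_mul]

theorem inv_mul_mul_inv_eq_one_iff [DecidableEq n] {A B X : Matrix n n K}
    (hA : IsUnit A) (hB : IsUnit B) : A⁻¹ * X * B⁻¹ = 1 ↔ X = A * B := by
  let _ := hA.invertible
  let _ := hB.invertible
  rw [mul_inv_eq_iff_eq_mul_of_invertible, Matrix.one_mul, inv_mul_eq_iff_eq_mul_of_invertible]

theorem riccatiMap_eq_mul_iff [DecidableEq n] (c : K) (R P : Matrix n n K) {A B : Matrix n n K}
    (hA : IsUnit A) (hB : IsUnit B) :
    riccatiMap c R P = A * B ↔ riccatiMap c (B * R * A) (A⁻¹ * P * B⁻¹) = 1 := by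
  rw [riccatiMap_mul_mul c R P (mul_nonsing_inv A (A.isUnit_iff_isUnit_det.mp hA))
    (nonsing_inv_mul B (B.isUnit_iff_isUnit_det.mp hB)), inv_mul_mul_inv_eq_one_iff hA hB]

theorem stmt_7_general [DecidableEq n] (c : K) {Q R S U Rbar P Pbar : Matrix n n K}
    (hS : IsUnit S) (hSQ : S * S = Q) (hU : U * Uᵀ = 1) (hR : S * R * S = U * Rbar * Uᵀ)
    (hPbar : Pbar = Uᵀ * S⁻¹ * P * S⁻¹ * U) :
    riccatiMap c R P = Q ↔ riccatiMap c Rbar Pbar = 1 := by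
  have hU' : Uᵀ * U = 1 := mul_eq_one_comm.mp hU
  have hQ : S * U * (Uᵀ * S) = Q := by
    rw [Matrix.mul_assoc, ← Matrix.mul_assoc U, hU, Matrix.one_mul, hSQ]
  have hRbar : Uᵀ * S * R * (S * U) = Rbar := by
    calc Uᵀ * S * R * (S * U) = Uᵀ * (S * R * S) * U := by simp only [Matrix.mul_assoc]
      _ = (Uᵀ * U) * Rbar * (Uᵀ * U) := by rw [hR]; simp only [Matrix.mul_assoc]
      _ = Rbar := by rw [hU', Matrix.one_mul, Matrix.mul_one]
  have hPbar' : (S * U)⁻¹ * P * (Uᵀ * S)⁻¹ = Pbar := by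
    rw [hPbar, Matrix.mul_inv_rev, Matrix.mul_inv_rev, inv_eq_right_inv hU,
      inv_eq_right_inv hU']
    simp only [Matrix.mul_assoc]
  have hU_unit : IsUnit U := .of_mul_eq_one _ hU
  have hUt_unit : IsUnit Uᵀ := .of_mul_eq_one _ hU'
  rw [← hQ, riccatiMap_eq_mul_iff c R P (hS.mul hU_unit) (hUt_unit.mul hS), hRbar, hPbar']

end RiccatiMap

/-- Let `Q`, `R` be `n×n` real symmetric positive definite
matrices, `sqrtQ` the symmetric positive definite square root of `Q`, and let
`sqrtQ·R·sqrtQ = U·R̄·Uᵀ` be a spectral decomposition with `U` orthogonal and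
`R̄` diagonal with positive entries. Then a symmetric matrix `P` satisfies
`P·R·P + (1/2)·Tr(R·P)·P = Q` if and only if
`P̄ := Uᵀ·sqrtQ⁻¹·P·sqrtQ⁻¹·U` satisfies `P̄·R̄·P̄ + (1/2)·Tr(R̄·P̄)·P̄ = I`. -/
theorem stmt_7 (n : ℕ) (Q R : Matrix (Fin n) (Fin n) ℝ)
    (hQsym : Qᵀ = Q) (hRsym : Rᵀ = R) (hQ : Q.PosDef) (hR : R.PosDef)
    (sqrtQ : Matrix (Fin n) (Fin n) ℝ) (hsqrtQsym : sqrtQᵀ = sqrtQ)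
    (hsqrtQ : sqrtQ.PosDef) (hsqrtQsq : sqrtQ * sqrtQ = Q)
    (U : Matrix (Fin n) (Fin n) ℝ) (hU : U * Uᵀ = 1)
    (r : Fin n → ℝ) (hr : ∀ i, 0 < r i)
    (hspec : sqrtQ * R * sqrtQ = U * Matrix.diagonal r * Uᵀ)
    (P : Matrix (Fin n) (Fin n) ℝ) (hPsym : Pᵀ = P)
    (Pbar : Matrix (Fin n) (Fin n) ℝ)
    (hPbar : Pbar = Uᵀ * sqrtQ⁻¹ * P * sqrtQ⁻¹ * U) :
    (P * R * P + ((1 : ℝ) / 2 * Matrix.trace (R * P)) • P = Q) ↔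
    (Pbar * Matrix.diagonal r * Pbar +
      ((1 : ℝ) / 2 * Matrix.trace (Matrix.diagonal r * Pbar)) • Pbar = 1) :=
  stmt_7_general (1 / 2) hsqrtQ.isUnit hsqrtQsq hU hspec hPbar
end

section
/- Let n ≥ 2 and let P, Q, R be n×n real symmetric positive definite matrices satisfying the Riccati-like equation P·R·P + (1/2)·Tr(R·P)·P = Q. Then the performance ratio J_ratio := 2·Tr(R·Q)/[Tr(R·P)]² satisfies 1 + 2/n ≤ J_ratio < 3. -/
open Matrix

/-!
Write `R = Bᴴ B`. The matrix `M = B P Bᴴ` is positive semidefinite and has the rank of `R P` and the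
same traces of powers, and multiplying the Riccati equation by `R` and taking traces turns the ratio
into `1 + 2 Tr(M²) / (Tr M)²`. In terms of the eigenvalues `lᵢ ≥ 0` of `M` the last quotient is
`∑ lᵢ² / (∑ lᵢ)²`: it is at least `1 / rank M` by the Cauchy–Schwarz inequality over the nonzero
eigenvalues, and less than `1` as soon as two of them are nonzero.
-/

section Sums

open scoped Finset

variable {ι K : Type*} [Semiring K] [LinearOrder K] [IsStrictOrderedRing K]

theorem sq_sum_le_card_ne_zero_mul_sum_sq [ExistsAddOfLE K] (s : Finset ι) (f : ι → K) :
    (∑ i ∈ s, f i) ^ 2 ≤ #{i ∈ s | f i ≠ 0} * ∑ i ∈ s, f i ^ 2 := by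
  calc (∑ i ∈ s, f i) ^ 2 = (∑ i ∈ s with f i ≠ 0, f i) ^ 2 := by rw [Finset.sum_filter_ne_zero]
    _ ≤ #{i ∈ s | f i ≠ 0} * ∑ i ∈ s with f i ≠ 0, f i ^ 2 := sq_sum_le_card_mul_sum_sq
    _ ≤ #{i ∈ s | f i ≠ 0} * ∑ i ∈ s, f i ^ 2 :=
      mul_le_mul_of_nonneg_left
        (Finset.sum_le_sum_of_subset_of_nonneg (Finset.filter_subset _ s) fun i _ _ ↦
          sq_nonneg (f i))
        (Nat.cast_nonneg _)

theorem sum_sq_lt_sq_sum_of_one_lt_card_ne_zero {s : Finset ι} {f : ι → K}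
    (hf : ∀ i ∈ s, 0 ≤ f i) (hcard : 1 < #{i ∈ s | f i ≠ 0}) :
    ∑ i ∈ s, f i ^ 2 < (∑ i ∈ s, f i) ^ 2 := by
  obtain ⟨i, hi, j, hj, hij⟩ := Finset.one_lt_card.mp hcard
  rw [Finset.mem_filter] at hi hj
  have hlt : f i < ∑ k ∈ s, f k :=
    Finset.single_lt_sum hij.symm hi.1 hj.1 ((hf j hj.1).lt_of_ne' hj.2) fun k hk _ ↦ hf k hk
  simp only [sq, Finset.sum_mul]
  refine Finset.sum_lt_sum (fun k hk ↦ ?_) ⟨i, hi.1, ?_⟩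
  · exact mul_le_mul_of_nonneg_left (Finset.single_le_sum hf hk) (hf k hk)
  · exact mul_lt_mul_of_pos_left hlt ((hf i hi.1).lt_of_ne' hi.2)

end Sums

section Products

variable {l m n R : Type*} [Fintype m] [Fintype n]

theorem trace_mul_pow_comm [DecidableEq n] [CommSemiring R] (A B : Matrix n n R) (k : ℕ) :
    ((A * B) ^ k).trace = ((B * A) ^ k).trace := by
  cases k with
  | zero => rw [pow_zero, pow_zero]
  | succ k =>
    calc ((A * B) ^ (k + 1)).trace = (A * ((B * A) ^ k * B)).trace := by
          rw [pow_succ, ← mul_assoc, mul_pow_mul, mul_assoc]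
      _ = ((B * A) ^ k * B * A).trace := trace_mul_comm _ _
      _ = ((B * A) ^ (k + 1)).trace := by rw [pow_succ, mul_assoc]

theorem rank_conjTranspose_mul_self_mul [Fintype l] [Field R] [PartialOrder R] [StarRing R]
    [StarOrderedRing R] (A : Matrix m n R) (X : Matrix n l R) :
    (Aᴴ * A * X).rank = (A * X).rank := by
  have hker : LinearMap.ker (Aᴴ * A * X).mulVecLin = LinearMap.ker (A * X).mulVecLin := by
    ext v
    simp only [LinearMap.mem_ker, mulVecLin_apply, ← mulVec_mulVec v _ X,
      conjTranspose_mul_self_mulVec_eq_zero]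
  have hadd := (Aᴴ * A * X).mulVecLin.finrank_range_add_finrank_ker
  rw [hker, ← (A * X).mulVecLin.finrank_range_add_finrank_ker] at hadd
  exact Nat.add_right_cancel hadd

theorem two_mul_trace_div_sq_trace_of_riccati [DecidableEq n] {K : Type*} [Field K] [NeZero (2 : K)]
    {P Q R : Matrix n n K}
    (hric : P * R * P + ((1 : K) / 2 * (R * P).trace) • P = Q) (htr : (R * P).trace ≠ 0) :
    2 * (R * Q).trace / (R * P).trace ^ 2 =
      1 + 2 * (((R * P) ^ 2).trace / (R * P).trace ^ 2) := by
  have hRQ : (R * Q).trace = ((R * P) ^ 2).trace + 1 / 2 * (R * P).trace ^ 2 := by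
    rw [← hric, mul_add, trace_add, mul_smul_comm, trace_smul, smul_eq_mul, sq (R * P)]
    simp only [mul_assoc, sq]
  have htwo : (2 : K) ≠ 0 := two_ne_zero
  rw [hRQ]
  field_simp
  ring

end Products

section RCLike

open scoped ComplexOrder Finset

variable {𝕜 n : Type*} [RCLike 𝕜] [Fintype n]

section Spectrum

variable {M : Matrix n n 𝕜}

theorem trace_pos_of_rank_pos (hM : M.PosSemidef) (hrank : 0 < M.rank) : 0 < M.trace := by
  refine hM.trace_nonneg.lt_of_ne' fun htr ↦ hrank.ne' ?_
  rw [hM.trace_eq_zero_iff.mp htr, rank_zero]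

variable [DecidableEq n]

theorem trace_pow_eq_sum_eigenvalues_pow (hM : M.IsHermitian) (k : ℕ) :
    (M ^ k).trace = ∑ i, (hM.eigenvalues i : 𝕜) ^ k := by
  conv_lhs => rw [hM.spectral_theorem, ← map_pow, Unitary.conjStarAlgAut_apply, trace_mul_cycle,
    Unitary.coe_star_mul_self, one_mul, diagonal_pow, trace_diagonal]
  rfl

theorem card_filter_eigenvalues_ne_zero (hM : M.IsHermitian) :
    #{i | hM.eigenvalues i ≠ 0} = M.rank := by
  rw [hM.rank_eq_card_non_zero_eigs, Fintype.card_subtype]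

theorem sq_trace_le_rank_mul_trace_sq (hM : M.IsHermitian) :
    M.trace ^ 2 ≤ M.rank * (M ^ 2).trace := by
  rw [hM.trace_eq_sum_eigenvalues, trace_pow_eq_sum_eigenvalues_pow hM,
    ← card_filter_eigenvalues_ne_zero hM]
  exact_mod_cast sq_sum_le_card_ne_zero_mul_sum_sq Finset.univ hM.eigenvalues

theorem trace_sq_lt_sq_trace (hM : M.PosSemidef) (hrank : 1 < M.rank) :
    (M ^ 2).trace < M.trace ^ 2 := by
  rw [hM.isHermitian.trace_eq_sum_eigenvalues, trace_pow_eq_sum_eigenvalues_pow hM.isHermitian]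
  rw [← card_filter_eigenvalues_ne_zero hM.isHermitian] at hrank
  exact_mod_cast
    sum_sq_lt_sq_sum_of_one_lt_card_ne_zero (fun i _ ↦ hM.eigenvalues_nonneg i) hrank

end Spectrum

open scoped MatrixOrder in
theorem exists_eq_conjTranspose_mul_self_of_posSemidef {A : Matrix n n 𝕜} (hA : A.PosSemidef) :
    ∃ B : Matrix n n 𝕜, A = Bᴴ * B := by
  classical
  exact CStarAlgebra.nonneg_iff_eq_star_mul_self.mp hA.nonneg

theorem exists_posSemidef_rank_eq_trace_pow_eq [DecidableEq n] {R P : Matrix n n 𝕜}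
    (hR : R.PosSemidef) (hP : P.PosSemidef) :
    ∃ M : Matrix n n 𝕜, M.PosSemidef ∧ M.rank = (R * P).rank ∧
      ∀ k, (M ^ k).trace = ((R * P) ^ k).trace := by
  obtain ⟨B, rfl⟩ := exists_eq_conjTranspose_mul_self_of_posSemidef hR
  obtain ⟨C, hC⟩ := exists_eq_conjTranspose_mul_self_of_posSemidef hP
  refine ⟨B * P * Bᴴ, hP.mul_mul_conjTranspose_same B, ?_, fun k ↦ ?_⟩
  · calc (B * P * Bᴴ).rank = ((C * Bᴴ)ᴴ * (C * Bᴴ)).rank := by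
          simp only [hC, conjTranspose_mul, conjTranspose_conjTranspose, mul_assoc]
      _ = (C * Bᴴ).rank := rank_conjTranspose_mul_self _
      _ = (P * Bᴴ).rank := by rw [hC, rank_conjTranspose_mul_self_mul]
      _ = (B * P).rank := by
          rw [← rank_conjTranspose, conjTranspose_mul, conjTranspose_conjTranspose,
            hP.isHermitian.eq]
      _ = (Bᴴ * B * P).rank := (rank_conjTranspose_mul_self_mul B P).symm
  · rw [trace_mul_pow_comm, mul_assoc]

theorem stmt_12_general {P Q R : Matrix n n 𝕜} (hP : P.PosSemidef) (hR : R.PosSemidef)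
    (hrank : 2 ≤ (R * P).rank)
    (hric : P * R * P + ((1 : 𝕜) / 2 * (R * P).trace) • P = Q) :
    1 + 2 / ((R * P).rank : 𝕜) ≤ 2 * (R * Q).trace / (R * P).trace ^ 2 ∧
    2 * (R * Q).trace / (R * P).trace ^ 2 < 3 := by
  classical
  obtain ⟨M, hM, hMrank, hMtrace⟩ := exists_posSemidef_rank_eq_trace_pow_eq hR hP
  have htrace : M.trace = (R * P).trace := by simpa only [pow_one] using hMtrace 1
  have hpos : 0 < (R * P).trace := htrace ▸ trace_pos_of_rank_pos hM (by lia)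
  have hlower : (R * P).trace ^ 2 ≤ (R * P).rank * ((R * P) ^ 2).trace := by
    simpa only [htrace, hMrank, hMtrace] using sq_trace_le_rank_mul_trace_sq hM.isHermitian
  have hupper : ((R * P) ^ 2).trace < (R * P).trace ^ 2 := by
    simpa only [htrace, hMtrace] using trace_sq_lt_sq_trace hM (by lia)
  have hrank_pos : (0 : 𝕜) < (R * P).rank := Nat.cast_pos.mpr (by lia)
  rw [two_mul_trace_div_sq_trace_of_riccati hric hpos.ne']
  constructor
  · rw [div_eq_mul_inv]
    gcongr
    rwa [le_div_iff₀ (pow_pos hpos 2), inv_mul_le_iff₀ hrank_pos]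
  · have hquot : ((R * P) ^ 2).trace / (R * P).trace ^ 2 < 1 :=
      (div_lt_one₀ (pow_pos hpos 2)).mpr hupper
    linear_combination 2 * hquot

end RCLike

/-- Let `n ≥ 2` and let `P, Q, R` be `n×n` real symmetric
positive definite matrices satisfying `P·R·P + (1/2)·Tr(R·P)·P = Q`. Then the
performance ratio `J_ratio := 2·Tr(R·Q)/[Tr(R·P)]²` satisfies
`1 + 2/n ≤ J_ratio < 3`. -/
theorem stmt_12 (n : ℕ) (hn : 2 ≤ n) (P Q R : Matrix (Fin n) (Fin n) ℝ)
    (hPsym : Pᵀ = P) (hQsym : Qᵀ = Q) (hRsym : Rᵀ = R)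
    (hP : P.PosDef) (hQ : Q.PosDef) (hR : R.PosDef)
    (hric : P * R * P + ((1 : ℝ) / 2 * Matrix.trace (R * P)) • P = Q) :
    1 + 2 / (n : ℝ) ≤ 2 * Matrix.trace (R * Q) / (Matrix.trace (R * P)) ^ 2 ∧
    2 * Matrix.trace (R * Q) / (Matrix.trace (R * P)) ^ 2 < 3 := by
  have hrank : (R * P).rank = n := by
    rw [rank_of_isUnit _ (hR.isUnit.mul hP.isUnit), Fintype.card_fin]
  simpa only [hrank] using stmt_12_general hP.posSemidef hR.posSemidef (hn.trans_eq hrank.symm) hric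
end

section
/- Let n ≥ 2 and let P, Q, R be n×n real symmetric positive definite matrices satisfying the Riccati-like equation P·R·P + (1/2)·Tr(R·P)·P = Q. Then the performance ratio J_ratio := 2·Tr(R·Q)/[Tr(R·P)]² equals 1 + 2/n if and only if all eigenvalues of the matrix R·Q are identical (equivalently, if and only if all eigenvalues of R·P are identical). -/
open Matrix

/-!
Since `P` is positive definite and `R` is symmetric, some invertible `V` satisfies `P = V Vᵀ` and
`Vᵀ R V = diag d`. With `t = Tr (R P) = ∑ dᵢ`, the Riccati-like equation becomes
`Q = V diag (d + t / 2) Vᵀ`, so that `R P` has the eigenvalues `dᵢ` and `R Q` the eigenvalues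
`dᵢ (dᵢ + t / 2)`. The condition on the ratio then reads `n ∑ dᵢ² = (∑ dᵢ)²`, which is equality in
Cauchy–Schwarz, so all `dᵢ` agree. Positivity of `Q` says that `dᵢ + t / 2 > 0`; summing gives
`t > 0`, so some `dₖ` is positive. If all `dᵢ (dᵢ + t / 2)` agree, they are then positive, hence so
are all `dᵢ`, and `x ↦ x (x + t / 2)` is injective on positive numbers.
-/

section EigenvalueIdentities

variable {ι : Type*} [Fintype ι]

theorem sum_sum_sub_sq {α : Type*} [CommRing α] (d : ι → α) :
    ∑ i, ∑ j, (d i - d j) ^ 2 = 2 * (Fintype.card ι * ∑ i, d i ^ 2 - (∑ i, d i) ^ 2) := by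
  simp only [sub_sq, Finset.sum_add_distrib, Finset.sum_sub_distrib, Finset.sum_const,
    Finset.card_univ, nsmul_eq_mul, ← Finset.mul_sum, ← Finset.sum_mul]
  ring

variable {𝕜 : Type*} [Field 𝕜] [LinearOrder 𝕜] [IsStrictOrderedRing 𝕜] {d : ι → 𝕜}

theorem card_mul_sum_sq_eq_sq_sum_iff :
    Fintype.card ι * ∑ i, d i ^ 2 = (∑ i, d i) ^ 2 ↔ ∀ i j, d i = d j := by
  have hsum : ∑ i, ∑ j, (d i - d j) ^ 2 = 0 ↔ ∀ i j, d i = d j := by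
    simp [Finset.sum_eq_zero_iff_of_nonneg, Finset.sum_nonneg, sq_nonneg, sub_eq_zero]
  rw [← hsum, sum_sum_sub_sq, mul_eq_zero_iff_left two_ne_zero, sub_eq_zero]

theorem two_mul_sum_div_sq_sum_eq_iff (κ : 𝕜) (ht : ∑ i, d i ≠ 0) :
    2 * (∑ i, d i * (d i + κ * ∑ j, d j)) / (∑ i, d i) ^ 2 = 2 * κ + 2 / Fintype.card ι ↔
      ∀ i j, d i = d j := by
  obtain ⟨i, -, -⟩ := Finset.exists_ne_zero_of_sum_ne_zero ht
  have hn : (Fintype.card ι : 𝕜) ≠ 0 := Nat.cast_ne_zero.mpr (Fintype.card_pos_iff.mpr ⟨i⟩).ne'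
  have hexpand : ∑ i, d i * (d i + κ * ∑ j, d j) = ∑ i, d i ^ 2 + κ * (∑ i, d i) ^ 2 := by
    simp only [mul_add, ← sq, Finset.sum_add_distrib, ← Finset.sum_mul]
    ring
  rw [← card_mul_sum_sq_eq_sq_sum_iff, hexpand, div_eq_iff (pow_ne_zero 2 ht)]
  field_simp
  constructor <;> intro h <;> linear_combination h

theorem sum_pos_of_add_mul_sum_pos [Nonempty ι] {κ : 𝕜} (hκ : 0 ≤ κ)
    (hd : ∀ i, 0 < d i + κ * ∑ j, d j) : 0 < ∑ i, d i := by
  have hpos : 0 < ∑ i, (d i + κ * ∑ j, d j) :=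
    Finset.sum_pos (fun i _ ↦ hd i) Finset.univ_nonempty
  have hfactor : ∑ i, (d i + κ * ∑ j, d j) = (1 + Fintype.card ι * κ) * ∑ i, d i := by
    simp only [Finset.sum_add_distrib, Finset.sum_const, Finset.card_univ, nsmul_eq_mul]
    ring
  exact pos_of_mul_pos_right (hfactor ▸ hpos) (by positivity)

theorem forall_mul_add_eq_iff_of_sum_pos {c : 𝕜} (hc : 0 ≤ c) (ht : 0 < ∑ i, d i)
    (hd : ∀ i, 0 < d i + c) :
    (∀ i j, d i * (d i + c) = d j * (d j + c)) ↔ ∀ i j, d i = d j := by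
  refine ⟨fun h i j ↦ ?_, fun h i j ↦ by rw [h i j]⟩
  obtain ⟨k, -, hk⟩ : ∃ k ∈ Finset.univ, 0 < d k :=
    Finset.exists_lt_of_sum_lt (by simpa only [Finset.sum_const_zero] using ht)
  have hpos (l : ι) : 0 < d l :=
    pos_of_mul_pos_left (h k l ▸ mul_pos hk (hd k)) (hd l).le
  have hroot : (d i - d j) * (d i + d j + c) = 0 := by linear_combination h i j
  have hsum : d i + d j + c ≠ 0 := by linarith [hpos i, hpos j]
  exact sub_eq_zero.mp ((mul_eq_zero_iff_right hsum).mp hroot)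

end EigenvalueIdentities

section Diagonalization

variable {ι : Type*} [Fintype ι] [DecidableEq ι]

section CommRing

variable {α : Type*} [CommRing α]

theorem charpoly_mul_conj_diagonal {R V W : Matrix ι ι α} {d : ι → α}
    (h : W * R * V = diagonal d) (e : ι → α) :
    (R * (V * diagonal e * W)).charpoly = (diagonal (d * e)).charpoly := by
  rw [← mul_assoc, charpoly_mul_comm, ← mul_assoc, ← mul_assoc, h, diagonal_mul_diagonal]
  rfl

theorem trace_eq_sum_of_charpoly_eq {A : Matrix ι ι α} {d : ι → α}
    (h : A.charpoly = (diagonal d).charpoly) : A.trace = ∑ i, d i := by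
  rw [trace_eq_neg_charpoly_nextCoeff, h, ← trace_eq_neg_charpoly_nextCoeff, trace_diagonal]

end CommRing

section Spectrum

variable {K L : Type*} [Field K] [Field L] (f : K →+* L) {A : Matrix ι ι K} {d : ι → K}

theorem spectrum_map_eq_range_of_charpoly_eq (h : A.charpoly = (diagonal d).charpoly) :
    spectrum L (A.map f) = Set.range (f ∘ d) := by
  have hmap : (A.map f).charpoly = (diagonal (f ∘ d)).charpoly := by
    rw [charpoly_map, h, ← charpoly_map, diagonal_map (map_zero f)]
    rfl
  rw [← spectrum_diagonal (f ∘ d)]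
  ext μ
  rw [mem_spectrum_iff_isRoot_charpoly, mem_spectrum_iff_isRoot_charpoly, hmap]

theorem subsingleton_spectrum_map_iff_of_charpoly_eq (h : A.charpoly = (diagonal d).charpoly) :
    (spectrum L (A.map f)).Subsingleton ↔ ∀ i j, d i = d j := by
  simp only [spectrum_map_eq_range_of_charpoly_eq f h, Set.Subsingleton, Set.forall_mem_range,
    Function.comp_apply, f.injective.eq_iff]

end Spectrum

variable {𝕜 : Type*} [RCLike 𝕜] {P Q R : Matrix ι ι 𝕜}

open scoped ComplexOrder MatrixOrder in
theorem exists_simultaneous_diagonalization (hP : P.PosDef) (hR : R.IsHermitian) :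
    ∃ (V : Matrix ι ι 𝕜) (d : ι → ℝ), IsUnit V ∧ P = V * Vᴴ ∧
      Vᴴ * R * V = diagonal (RCLike.ofReal ∘ d) := by
  obtain ⟨B, rfl⟩ := CStarAlgebra.nonneg_iff_eq_star_mul_self.mp hP.posSemidef.nonneg
  have hS : (B * R * Bᴴ).IsHermitian := isHermitian_mul_mul_conjTranspose B hR
  let U : Matrix ι ι 𝕜 := hS.eigenvectorUnitary
  have hU : U * Uᴴ = 1 := Unitary.coe_mul_star_self _
  refine ⟨Bᴴ * U, hS.eigenvalues, ?_, ?_, ?_⟩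
  · exact (isUnit_of_mul_isUnit_right hP.isUnit).star.mul Unitary.isUnit_coe
  · rw [conjTranspose_mul, conjTranspose_conjTranspose, mul_assoc, ← mul_assoc U, hU, one_mul,
      star_eq_conjTranspose]
  · rw [← hS.conjStarAlgAut_star_eigenvectorUnitary]
    simp [U, star_eq_conjTranspose, mul_assoc]

open scoped ComplexOrder in
theorem exists_charpoly_eq_of_mul_mul_add_smul (hP : P.PosDef) (hQ : Q.PosDef)
    (hR : R.IsHermitian) {c : ℝ} (h : P * R * P + (c : 𝕜) • P = Q) :
    ∃ d : ι → ℝ, (∀ i, 0 < d i + c) ∧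
      (R * P).charpoly = (diagonal fun i ↦ (d i : 𝕜)).charpoly ∧
      (R * Q).charpoly = (diagonal fun i ↦ (d i * (d i + c) : 𝕜)).charpoly := by
  obtain ⟨V, d, hV, rfl, hRV⟩ := exists_simultaneous_diagonalization hP hR
  have hVQ : V * diagonal (fun i ↦ (d i + c : 𝕜)) * Vᴴ = Q := by
    have hadd : diagonal (fun i ↦ (d i + c : 𝕜)) = Vᴴ * R * V + (c : 𝕜) • 1 := by
      rw [hRV, smul_one_eq_diagonal, diagonal_add]
      rfl
    rw [← h, hadd]
    simp [mul_add, add_mul, mul_assoc]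
  refine ⟨d, ?_, ?_, ?_⟩
  · rw [← hVQ, ← star_eq_conjTranspose, hV.posDef_star_right_conjugate_iff,
      posDef_diagonal_iff] at hQ
    exact_mod_cast hQ
  · simpa [Function.comp_def] using charpoly_mul_conj_diagonal hRV 1
  · rw [← hVQ, charpoly_mul_conj_diagonal hRV]
    rfl

end Diagonalization

theorem stmt_14_general {ι : Type*} [Fintype ι] [DecidableEq ι] [Nonempty ι]
    {P Q R : Matrix ι ι ℝ} (hP : P.PosDef) (hQ : Q.PosDef) (hR : R.IsHermitian) {κ : ℝ}
    (hκ : 0 ≤ κ) (hric : P * R * P + (κ * trace (R * P)) • P = Q) :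
    (2 * trace (R * Q) / trace (R * P) ^ 2 = 2 * κ + 2 / Fintype.card ι ↔
      (spectrum ℂ ((R * Q).map Complex.ofRealHom)).Subsingleton) ∧
    (2 * trace (R * Q) / trace (R * P) ^ 2 = 2 * κ + 2 / Fintype.card ι ↔
      (spectrum ℂ ((R * P).map Complex.ofRealHom)).Subsingleton) := by
  obtain ⟨d, hd, hRP, hRQ⟩ :=
    exists_charpoly_eq_of_mul_mul_add_smul (c := κ * trace (R * P)) hP hQ hR hric
  simp only [RCLike.ofReal_real_eq_id, id] at hRP hRQ
  have htrace : trace (R * P) = ∑ i, d i := trace_eq_sum_of_charpoly_eq hRP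
  rw [htrace] at hd hRQ
  have hpos : 0 < ∑ i, d i := sum_pos_of_add_mul_sum_pos hκ hd
  rw [htrace, trace_eq_sum_of_charpoly_eq hRQ, two_mul_sum_div_sq_sum_eq_iff κ hpos.ne',
    subsingleton_spectrum_map_iff_of_charpoly_eq _ hRP,
    subsingleton_spectrum_map_iff_of_charpoly_eq _ hRQ,
    forall_mul_add_eq_iff_of_sum_pos (mul_nonneg hκ hpos.le) hpos hd]
  exact ⟨Iff.rfl, Iff.rfl⟩

/-- Let `n ≥ 2` and let `P, Q, R` be `n×n` real symmetric
positive definite matrices satisfying `P·R·P + (1/2)·Tr(R·P)·P = Q`. Then the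
performance ratio `J_ratio := 2·Tr(R·Q)/[Tr(R·P)]²` equals `1 + 2/n` if and
only if all eigenvalues of `R·Q` are identical (equivalently, iff all
eigenvalues of `R·P` are identical), eigenvalues being the elements of the
spectrum of the complexified matrices. -/
theorem stmt_14 (n : ℕ) (hn : 2 ≤ n) (P Q R : Matrix (Fin n) (Fin n) ℝ)
    (hPsym : Pᵀ = P) (hQsym : Qᵀ = Q) (hRsym : Rᵀ = R)
    (hP : P.PosDef) (hQ : Q.PosDef) (hR : R.PosDef)
    (hric : P * R * P + ((1 : ℝ) / 2 * Matrix.trace (R * P)) • P = Q) :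
    (2 * Matrix.trace (R * Q) / (Matrix.trace (R * P)) ^ 2 = 1 + 2 / (n : ℝ) ↔
      ∀ μ ∈ spectrum ℂ ((R * Q).map (Complex.ofReal ·)),
        ∀ ν ∈ spectrum ℂ ((R * Q).map (Complex.ofReal ·)), μ = ν) ∧
    (2 * Matrix.trace (R * Q) / (Matrix.trace (R * P)) ^ 2 = 1 + 2 / (n : ℝ) ↔
      ∀ μ ∈ spectrum ℂ ((R * P).map (Complex.ofReal ·)),
        ∀ ν ∈ spectrum ℂ ((R * P).map (Complex.ofReal ·)), μ = ν) := by
  have : NeZero n := ⟨by omega⟩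
  have hgen := stmt_14_general hP hQ hR.isHermitian (by norm_num) hric
  rwa [Fintype.card_fin, mul_one_div_cancel two_ne_zero] at hgen
end
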